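/- Let P[1..m] be a string over a linearly ordered alphabet and let 2 ≤ j ≤ m. If PP_P(j) ≠ j and PC_P(j) ≠ j, then PP_P(PC_P(j)) = PP_P(j). (Sub-lemma in the proof of Theorem 3: an element and its prefix-child have the same prefix-parent when both exist.) -/

import Mathlib

/-!
Write `p = PP P j` and `c = PC P j`. When `p ≠ j` and `c ≠ j`, the position `c` is the
≺-minimum of the open interval `(p, j)`. Since `p` is the last position before `j` with
`P[p] ≺ P[j]`, every position in `(p, j)` is ≻ `j`; in particular `P[p] ≺ P[j] ≺ P[c]`.
No position strictly between `p` and `c` is ≺ `c` by minimality of `c`. Hence `p` is the last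
position before `c` that is ≺ `c`, that is, `PP P c = p`.
-/

namespace CTM

variable {α : Type*} [LinearOrder α] {n : ℕ}

/-- `S[i] ≺ S[j]`: strict order on positions, values compared first, ties broken
toward the smaller index. -/
def prec (S : Fin n → α) (i j : Fin n) : Prop :=
  S i < S j ∨ (S i = S j ∧ i < j)

instance (S : Fin n → α) (i j : Fin n) : Decidable (prec S i j) :=
  inferInstanceAs (Decidable (_ ∨ _))

/-- `S[i] ⪯ S[j]`. -/
def preceq (S : Fin n → α) (i j : Fin n) : Prop :=
  i = j ∨ prec S i j

/-- The set `{j : j < i and S[j] ≺ S[i]}`. -/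
def PPset (S : Fin n → α) (i : Fin n) : Finset (Fin n) :=
  Finset.univ.filter (fun j => j < i ∧ prec S j i)

/-- Prefix-parent representation. -/
def PP (S : Fin n → α) (i : Fin n) : Fin n :=
  if h : (PPset S i).Nonempty then (PPset S i).max' h else i

lemma PP_le (S : Fin n → α) (i : Fin n) : PP S i ≤ i := by
  unfold PP
  split
  · next h =>
      have hm := (PPset S i).max'_mem h
      simp only [PPset, Finset.mem_filter] at hm
      exact le_of_lt hm.2.1
  · exact le_refl i

/-- The ≺-minimum position of a nonempty finite set of positions. -/
noncomputable def minPos (S : Fin n → α) (F : Finset (Fin n)) (h : F.Nonempty) : Fin n :=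
  (F.exists_min_image (fun j => toLex (S j, j)) h).choose

lemma minPos_mem (S : Fin n → α) (F : Finset (Fin n)) (h : F.Nonempty) :
    minPos S F h ∈ F :=
  (F.exists_min_image (fun j => toLex (S j, j)) h).choose_spec.1

/-- Prefix-child representation (0-indexed: position `0` is the first position). -/
noncomputable def PC (S : Fin n → α) (i : Fin n) : Fin n :=
  if h0 : i.val = 0 then i
  else if h1 : PP S i = i then
    minPos S (Finset.univ.filter (fun j => j < i))
      ⟨⟨0, i.pos⟩, Finset.mem_filter.mpr ⟨Finset.mem_univ _, by
        simp only [Fin.lt_def]; omega⟩⟩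
  else if _h2 : (PP S i).val + 1 = i.val then i
  else
    minPos S (Finset.univ.filter (fun j => PP S i < j ∧ j < i))
      ⟨⟨(PP S i).val + 1, by
          have h3 : (PP S i).val < i.val := Fin.lt_def.mp (lt_of_le_of_ne (PP_le S i) h1)
          have h4 := i.isLt
          omega⟩,
        Finset.mem_filter.mpr ⟨Finset.mem_univ _, by
          have h3 : (PP S i).val < i.val := Fin.lt_def.mp (lt_of_le_of_ne (PP_le S i) h1)
          constructor <;> simp only [Fin.lt_def] <;> omega⟩⟩

/-- Global-parent representation. -/
noncomputable def GP (S : Fin n → α) (i : Fin n) : Fin n :=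
  if h : ∃ j, i < j ∧ PC S j = i then h.choose else PP S i

/-- Binary trees whose nodes are positions of a string of length `n`. -/
inductive PosTree (n : ℕ) where
  | nil : PosTree n
  | node : Fin n → PosTree n → PosTree n → PosTree n

/-- The Cartesian tree of the restriction of `S` to a finite set of positions. -/
noncomputable def CTAux (S : Fin n → α) (F : Finset (Fin n)) : PosTree n :=
  if h : F.Nonempty then
    PosTree.node (minPos S F h)
      (CTAux S (F.filter (fun j => j < minPos S F h)))
      (CTAux S (F.filter (fun j => minPos S F h < j)))
  else PosTree.nil
termination_by F.card
decreasing_by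
  · exact Finset.card_lt_card
      (Finset.filter_ssubset.mpr ⟨minPos S F h, minPos_mem S F h, by simp⟩)
  · exact Finset.card_lt_card
      (Finset.filter_ssubset.mpr ⟨minPos S F h, minPos_mem S F h, by simp⟩)

/-- The Cartesian tree of a string, as a binary tree on positions. -/
noncomputable def CT (S : Fin n → α) : PosTree n :=
  CTAux S Finset.univ

/-- Parent-distance representation. -/
def PD (S : Fin n → α) (i : Fin n) : ℕ :=
  if h : (PPset S i).Nonempty then i.val - ((PPset S i).max' h).val else 0


lemma prec_iff_toLex (S : Fin n → α) (i j : Fin n) :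
    prec S i j ↔ toLex (S i, i) < toLex (S j, j) := by
  simp [prec, Prod.Lex.toLex_lt_toLex]

lemma minPos_le (S : Fin n → α) (F : Finset (Fin n)) (h : F.Nonempty) {k : Fin n}
    (hk : k ∈ F) : ¬ prec S k (minPos S F h) := by
  rw [prec_iff_toLex, not_lt]
  exact (F.exists_min_image (fun j => toLex (S j, j)) h).choose_spec.2 k hk

/-- A position distinct from `i` is the prefix-parent of `i` exactly when it is the last
position before `i` that is ≺ `i`. -/
lemma PP_eq_iff (S : Fin n → α) {i p : Fin n} (hp : p ≠ i) :
    PP S i = p ↔ p < i ∧ prec S p i ∧ ∀ k, p < k → k < i → ¬ prec S k i := by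
  unfold PP
  split
  · next h =>
    rw [Finset.max'_eq_iff]
    simp only [PPset, Finset.mem_filter, Finset.mem_univ, true_and, and_assoc]
    refine and_congr_right fun _ => and_congr_right fun _ => forall_congr' fun k => ?_
    rw [← not_lt]
    tauto
  · next h =>
    refine ⟨fun e => absurd e.symm hp, fun ⟨hlt, hprec, _⟩ => absurd ⟨p, ?_⟩ h⟩
    simp [PPset, hlt, hprec]

/-- Sub-lemma in the proof of Theorem 3: if `PP_P(j) ≠ j` and `PC_P(j) ≠ j`
(for a non-first position `j`), then `PP_P(PC_P(j)) = PP_P(j)`. -/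
theorem pp_of_pc (m : ℕ) (P : Fin m → α) (j : Fin m) (hj : 0 < j.val)
    (h1 : PP P j ≠ j) (h2 : PC P j ≠ j) :
    PP P (PC P j) = PP P j := by
  obtain ⟨-, hpj, hmax⟩ := (PP_eq_iff P h1).1 rfl
  obtain ⟨hpc, hcj, hmin⟩ : PP P j < PC P j ∧ PC P j < j ∧
      ∀ k, PP P j < k → k < j → ¬ prec P k (PC P j) := by
    unfold PC at h2 ⊢
    rw [dif_neg hj.ne', dif_neg h1] at h2 ⊢
    split_ifs at h2 ⊢ with h3
    · exact absurd rfl h2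
    · generalize_proofs hF
      have hmem := minPos_mem P _ hF
      simp only [Finset.mem_filter, Finset.mem_univ, true_and] at hmem
      exact ⟨hmem.1, hmem.2, fun k hk hkj => minPos_le P _ hF (by simp [hk, hkj])⟩
  refine (PP_eq_iff P hpc.ne).2 ⟨hpc, ?_, fun k hk hkc => hmin k hk (hkc.trans hcj)⟩
  have hc := hmax _ hpc hcj
  rw [prec_iff_toLex] at hpj hc ⊢
  exact hpj.trans_le (not_lt.1 hc)

end CTM
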